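/- Let (X,d) be a proper geodesic metric space, L : [0,∞) → [0,∞) increasing, convex, superlinear with L(0)=0, H its Legendre transform, and g : X → ℝ Lipschitz. Then for every x ∈ X and Lebesgue-almost every t > 0, the function t ↦ Q_t g(x) is differentiable at t and (d/dt) Q_t g(x) + H(|∇⁻ Q_t g|(x)) = 0, i.e. u(x,t) = Q_t g(x) solves the Hamilton–Jacobi equation ∂_t u + H(|∇⁻ u|) = 0 for a.e. t > 0. -/

import Mathlib

open Metric Filter NNReal Topology MeasureTheory

/-- Hopf–Lax (infimum-convolution) semigroup, with `Q_0 g = g`. -/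
noncomputable def hopfLaxQ {X : Type*} [MetricSpace X] (L : ℝ → ℝ) (g : X → ℝ)
    (t : ℝ) (x : X) : ℝ :=
  if t = 0 then g x else ⨅ y : X, (t * L (dist x y / t) + g y)

/-- The (one-dimensional) Legendre transform `H(w) = sup_{v ≥ 0} (w·v − L(v))`. -/
noncomputable def legendreH (L : ℝ → ℝ) (w : ℝ) : ℝ :=
  sSup ((fun v => w * v - L v) '' Set.Ici 0)

/-- The metric subgradient `|∇⁻ f|(x₀) = limsup_{x → x₀} [f(x₀) − f(x)]₊ / d(x,x₀)`. -/
noncomputable def metricSubgradient {X : Type*} [MetricSpace X] (f : X → ℝ) (x₀ : X) : ℝ :=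
  limsup (fun x => max (f x₀ - f x) 0 / dist x x₀) (𝓝[≠] x₀)

section HopfLaxHelpers

variable {X : Type*} [MetricSpace X] {L : ℝ → ℝ} {g : X → ℝ} {K : ℝ≥0}

/-- Superlinearity: `L` eventually dominates any linear function. -/
lemma hl_dom (hLsuper : Tendsto (fun u => L u / u) atTop atTop) (a : ℝ) :
    ∃ V : ℝ, 0 < V ∧ ∀ v, V ≤ v → a * v ≤ L v := by
  obtain ⟨V, hV⟩ := eventually_atTop.1 (hLsuper.eventually_ge_atTop a)
  refine ⟨max V 1, by positivity, fun v hv => ?_⟩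
  have h1 : 0 < v := lt_of_lt_of_le one_pos ((le_max_right _ _).trans hv)
  have := hV v ((le_max_left _ _).trans hv)
  rwa [le_div_iff₀ h1] at this

lemma hl_bdd (hLnonneg : ∀ u, 0 ≤ u → 0 ≤ L u)
    (hLsuper : Tendsto (fun u => L u / u) atTop atTop) (w : ℝ) :
    BddAbove ((fun v => w * v - L v) '' Set.Ici 0) := by
  obtain ⟨V, hV0, hV⟩ := hl_dom hLsuper w
  refine ⟨|w| * V, ?_⟩
  rintro _ ⟨v, hv, rfl⟩
  have hv : 0 ≤ v := hv
  simp only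
  rcases le_total V v with h | h
  · have := hV v h
    have : 0 ≤ |w| * V := by positivity
    linarith
  · have h1 := hLnonneg v hv
    have h2 : w * v ≤ |w| * V := by
      calc w * v ≤ |w| * v := by gcongr; exact le_abs_self w
        _ ≤ |w| * V := by gcongr
    linarith

lemma hl_le_H (hLnonneg : ∀ u, 0 ≤ u → 0 ≤ L u)
    (hLsuper : Tendsto (fun u => L u / u) atTop atTop) (w v : ℝ) (hv : 0 ≤ v) :
    w * v - L v ≤ legendreH L w :=
  le_csSup (hl_bdd hLnonneg hLsuper w) ⟨v, hv, rfl⟩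

lemma hl_H_le {w B : ℝ} (h : ∀ v, 0 ≤ v → w * v - L v ≤ B) : legendreH L w ≤ B := by
  apply csSup_le
  · exact ⟨_, 0, Set.self_mem_Ici, rfl⟩
  · rintro _ ⟨v, hv, rfl⟩
    exact h v hv

lemma hl_H_cont (hL0 : L 0 = 0) (hLnonneg : ∀ u, 0 ≤ u → 0 ≤ L u)
    (hLsuper : Tendsto (fun u => L u / u) atTop atTop) (w : ℝ) :
    ∃ V : ℝ, 0 < V ∧ ∀ e, 0 ≤ e → e ≤ 1 → legendreH L (w + e) ≤ legendreH L w + e * V := by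
  obtain ⟨V, hV0, hV⟩ := hl_dom hLsuper (w + 1)
  refine ⟨V, hV0, fun e he he1 => hl_H_le fun v hv => ?_⟩
  have h0 := hl_le_H hLnonneg hLsuper w 0 le_rfl
  have h1 := hl_le_H hLnonneg hLsuper w v hv
  rw [hL0] at h0
  rcases le_total V v with h | h
  · have h2 := hV v h
    have : e * v ≤ 1 * v := by gcongr
    have : 0 ≤ e * V := by positivity
    nlinarith
  · have : e * v ≤ e * V := by gcongr
    nlinarith

lemma hl_Q_bdd (hLnonneg : ∀ u, 0 ≤ u → 0 ≤ L u)
    (hLsuper : Tendsto (fun u => L u / u) atTop atTop)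
    (hg : LipschitzWith K g) {t : ℝ} (ht : 0 < t) (x : X) :
    BddBelow (Set.range fun y : X => t * L (dist x y / t) + g y) := by
  refine ⟨g x - t * legendreH L K, ?_⟩
  rintro _ ⟨y, rfl⟩
  have h1 := hl_le_H hLnonneg hLsuper K (dist x y / t) (by positivity)
  have h2 : g x - g y ≤ K * dist x y := by
    have := hg.dist_le_mul x y
    rw [Real.dist_eq] at this
    exact (le_abs_self _).trans this
  have h3 : t * (K * (dist x y / t) - L (dist x y / t)) ≤ t * legendreH L K := by gcongr
  have h4 : t * (K * (dist x y / t)) = K * dist x y := by field_simp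
  simp only
  linarith

lemma hl_Q_le (hLnonneg : ∀ u, 0 ≤ u → 0 ≤ L u)
    (hLsuper : Tendsto (fun u => L u / u) atTop atTop)
    (hg : LipschitzWith K g) {t : ℝ} (ht : 0 < t) (x y : X) :
    hopfLaxQ L g t x ≤ t * L (dist x y / t) + g y := by
  rw [hopfLaxQ, if_neg ht.ne']
  exact ciInf_le (hl_Q_bdd hLnonneg hLsuper hg ht x) y

lemma hl_le_Q {t : ℝ} (ht : 0 < t) (x : X) {B : ℝ}
    (h : ∀ y, B ≤ t * L (dist x y / t) + g y) : B ≤ hopfLaxQ L g t x := by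
  rw [hopfLaxQ, if_neg ht.ne']
  have : Nonempty X := ⟨x⟩
  exact le_ciInf h

/-- `Q_t g` is `K`-Lipschitz in a geodesic space. -/
lemma hl_Q_lip (hgeo : ∀ x y : X, ∀ τ : ℝ, 0 ≤ τ → τ ≤ 1 →
      ∃ z : X, dist x z = τ * dist x y ∧ dist z y = (1 - τ) * dist x y)
    (hLnonneg : ∀ u, 0 ≤ u → 0 ≤ L u)
    (hLmono : MonotoneOn L (Set.Ici 0))
    (hLsuper : Tendsto (fun u => L u / u) atTop atTop)
    (hg : LipschitzWith K g) {t : ℝ} (ht : 0 < t) (x x' : X) :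
    hopfLaxQ L g t x - hopfLaxQ L g t x' ≤ K * dist x x' := by
  suffices h : hopfLaxQ L g t x - K * dist x x' ≤ hopfLaxQ L g t x' by linarith
  apply hl_le_Q ht
  intro y
  have hK : (0:ℝ) ≤ K := K.2
  rcases le_total (dist x y) (dist x' y) with h | h
  · have h1 := hl_Q_le hLnonneg hLsuper hg ht x y
    have h2 : L (dist x y / t) ≤ L (dist x' y / t) :=
      hLmono (Set.mem_Ici.2 (by positivity)) (Set.mem_Ici.2 (by positivity)) (by gcongr)
    have h3 : t * L (dist x y / t) ≤ t * L (dist x' y / t) := by gcongr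
    have : 0 ≤ K * dist x x' := by positivity
    linarith
  · rcases (dist_nonneg (x := x) (y := y)).eq_or_lt with h0 | h0
    · have : x = y := dist_eq_zero.1 h0.symm
      subst this
      have h1 := hl_Q_le hLnonneg hLsuper hg ht x x
      have h4 : dist x' x = 0 := le_antisymm (by linarith) dist_nonneg
      rw [dist_self] at h1
      rw [dist_comm x x', h4]
      simpa using h1
    · obtain ⟨z, hz1, hz2⟩ := hgeo x y (dist x' y / dist x y) (by positivity)
        (by rw [div_le_one h0]; exact h)
      rw [div_mul_cancel₀ _ h0.ne'] at hz1
      have hz3 : dist z y = dist x y - dist x' y := by rw [hz2]; field_simp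
      have h1 := hl_Q_le hLnonneg hLsuper hg ht x z
      rw [hz1] at h1
      have h2 : g z - g y ≤ K * dist z y := by
        have := hg.dist_le_mul z y
        rw [Real.dist_eq] at this
        exact (le_abs_self _).trans this
      have h3 : dist z y ≤ dist x x' := by
        have := dist_triangle x x' y
        linarith
      have h4 : K * dist z y ≤ K * dist x x' := by gcongr
      linarith

lemma hl_semi_le (hLnonneg : ∀ u, 0 ≤ u → 0 ≤ L u)
    (hLmono : MonotoneOn L (Set.Ici 0))
    (hLconv : ConvexOn ℝ (Set.Ici 0) L)
    (hLsuper : Tendsto (fun u => L u / u) atTop atTop)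
    (hg : LipschitzWith K g) {t s : ℝ} (ht : 0 < t) (hs : 0 < s) (x y : X) :
    hopfLaxQ L g (t + s) x ≤ s * L (dist x y / s) + hopfLaxQ L g t y := by
  suffices h : hopfLaxQ L g (t + s) x - s * L (dist x y / s) ≤ hopfLaxQ L g t y by linarith
  apply hl_le_Q ht
  intro z
  have hts : 0 < t + s := by positivity
  have h1 := hl_Q_le hLnonneg hLsuper hg hts x z
  have h2 : L (dist x z / (t + s)) ≤ L ((dist x y + dist y z) / (t + s)) :=
    hLmono (Set.mem_Ici.2 (by positivity)) (Set.mem_Ici.2 (by positivity))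
      (by gcongr; exact dist_triangle x y z)
  have m1 : dist x y / s ∈ Set.Ici (0:ℝ) := Set.mem_Ici.2 (by positivity)
  have m2 : dist y z / t ∈ Set.Ici (0:ℝ) := Set.mem_Ici.2 (by positivity)
  have p1 : 0 ≤ s / (t + s) := by positivity
  have p2 : 0 ≤ t / (t + s) := by positivity
  have p3 : s / (t + s) + t / (t + s) = 1 := by field_simp; ring
  have h3 := hLconv.2 m1 m2 p1 p2 p3
  simp only [smul_eq_mul] at h3
  have h4 : s / (t + s) * (dist x y / s) + t / (t + s) * (dist y z / t)
      = (dist x y + dist y z) / (t + s) := by field_simp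
  rw [h4] at h3
  have h5 : (t + s) * L (dist x z / (t + s)) ≤ (t + s) *
      (s / (t + s) * L (dist x y / s) + t / (t + s) * L (dist y z / t)) := by
    gcongr; exact h2.trans h3
  have h6 : (t + s) * (s / (t + s) * L (dist x y / s) + t / (t + s) * L (dist y z / t))
      = s * L (dist x y / s) + t * L (dist y z / t) := by field_simp
  linarith

lemma hl_semi_ge (hgeo : ∀ x y : X, ∀ τ : ℝ, 0 ≤ τ → τ ≤ 1 →
      ∃ z : X, dist x z = τ * dist x y ∧ dist z y = (1 - τ) * dist x y)
    (hLnonneg : ∀ u, 0 ≤ u → 0 ≤ L u)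
    (hLsuper : Tendsto (fun u => L u / u) atTop atTop)
    (hg : LipschitzWith K g) {t s : ℝ} (ht : 0 < t) (hs : 0 < s) (x : X) {B : ℝ}
    (hB : ∀ y, B ≤ s * L (dist x y / s) + hopfLaxQ L g t y) :
    B ≤ hopfLaxQ L g (t + s) x := by
  have hts : 0 < t + s := by positivity
  apply hl_le_Q hts
  intro z
  obtain ⟨y, hy1, hy2⟩ := hgeo x z (s / (t + s)) (by positivity)
    (by rw [div_le_one hts]; linarith)
  have h1 := hB y
  have h2 := hl_Q_le hLnonneg hLsuper hg ht y z
  have e1 : dist x y / s = dist x z / (t + s) := by rw [hy1]; field_simp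
  have e2 : dist y z / t = dist x z / (t + s) := by rw [hy2]; field_simp; ring
  rw [e1] at h1
  rw [e2] at h2
  nlinarith

lemma hl_point (hgeo : ∀ x y : X, ∀ τ : ℝ, 0 ≤ τ → τ ≤ 1 →
      ∃ z : X, dist x z = τ * dist x y ∧ dist z y = (1 - τ) * dist x y)
    (hL0 : L 0 = 0)
    (hLnonneg : ∀ u, 0 ≤ u → 0 ≤ L u)
    (hLmono : MonotoneOn L (Set.Ici 0))
    (hLconv : ConvexOn ℝ (Set.Ici 0) L)
    (hLsuper : Tendsto (fun u => L u / u) atTop atTop)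
    (hg : LipschitzWith K g) (x : X) {t D : ℝ} (ht : 0 < t)
    (hD : HasDerivAt (fun s => hopfLaxQ L g s x) D t) :
    D + legendreH L (metricSubgradient (fun y => hopfLaxQ L g t y) x) = 0 := by
  set w := metricSubgradient (fun y => hopfLaxQ L g t y) x with hw
  have hK : (0:ℝ) ≤ K := K.2
  have hslope := hD.tendsto_slope_zero_right
  have hbdd : IsBoundedUnder (· ≤ ·) (𝓝[≠] x)
      (fun y => max (hopfLaxQ L g t x - hopfLaxQ L g t y) 0 / dist y x) := by
    refine isBoundedUnder_of ⟨K, fun y => ?_⟩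
    apply div_le_of_le_mul₀ dist_nonneg hK
    rw [dist_comm]
    exact max_le (hl_Q_lip hgeo hLnonneg hLmono hLsuper hg ht x y) (by positivity)
  -- every slope lies below `H (w + e)`
  have hup : ∀ e, 0 < e → -D ≤ legendreH L (w + e) := by
    intro e he
    have hev := eventually_lt_of_limsup_lt (b := w + e)
      (show limsup _ _ < w + e from lt_add_of_pos_right w he) hbdd
    rw [eventually_nhdsWithin_iff, Metric.eventually_nhds_iff] at hev
    obtain ⟨δ, hδ, hball⟩ := hev
    obtain ⟨C, hC0, hC⟩ := hl_dom hLsuper K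
    have hH0 : 0 ≤ legendreH L (w + e) := by
      have := hl_le_H hLnonneg hLsuper (w + e) 0 le_rfl
      simpa [hL0] using this
    have hs : ∀ᶠ s in 𝓝[>] (0:ℝ), -legendreH L (w + e) ≤
        s⁻¹ • (hopfLaxQ L g (t + s) x - hopfLaxQ L g t x) := by
      filter_upwards [Ioo_mem_nhdsGT (show (0:ℝ) < δ / C by positivity)] with s hs
      obtain ⟨hs0, hs1⟩ := hs
      rw [lt_div_iff₀ hC0] at hs1
      have key : hopfLaxQ L g t x - s * legendreH L (w + e) ≤ hopfLaxQ L g (t + s) x := by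
        apply hl_semi_ge hgeo hLnonneg hLsuper hg ht hs0
        intro y
        have hpos : 0 ≤ s * legendreH L (w + e) := by positivity
        rcases le_total C (dist x y / s) with h | h
        · have h1 := hC _ h
          have h2 := hl_Q_lip hgeo hLnonneg hLmono hLsuper hg ht x y
          have h3 : s * (K * (dist x y / s)) ≤ s * L (dist x y / s) := by gcongr
          have h4 : s * (K * (dist x y / s)) = K * dist x y := by field_simp
          linarith
        · have h1 := hl_le_H hLnonneg hLsuper (w + e) (dist x y / s) (by positivity)
          have h3 : s * ((w + e) * (dist x y / s) - L (dist x y / s))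
            ≤ s * legendreH L (w + e) := by gcongr
          have h4 : s * ((w + e) * (dist x y / s)) = (w + e) * dist x y := by field_simp
          have h5 : hopfLaxQ L g t x - hopfLaxQ L g t y ≤ (w + e) * dist x y := by
            by_cases hxy : y = x
            · subst hxy; simp
            · rw [div_le_iff₀ hs0] at h
              have hd : dist y x < δ := by rw [dist_comm]; nlinarith
              have h6 := hball hd hxy
              rw [div_lt_iff₀ (dist_pos.2 hxy), dist_comm] at h6
              exact (le_max_left _ _).trans h6.le
          linarith
      rw [smul_eq_mul, inv_mul_eq_div, le_div_iff₀ hs0]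
      linarith
    have := ge_of_tendsto hslope hs
    linarith
  have hle : -D ≤ legendreH L w := by
    obtain ⟨V, hV0, hV⟩ := hl_H_cont hL0 hLnonneg hLsuper w
    by_contra! hcon
    set r := -D - legendreH L w with hr
    have hr0 : 0 < r := by linarith
    have he0 : 0 < min 1 (r / (2 * V)) := by positivity
    have h1 := hup _ he0
    have h2 := hV _ he0.le (min_le_left _ _)
    have h3 : min 1 (r / (2 * V)) * V ≤ r / (2 * V) * V := by gcongr; exact min_le_right _ _
    have h4 : r / (2 * V) * V = r / 2 := by field_simp
    linarith
  have hD0 : D ≤ 0 := by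
    refine le_of_tendsto hslope ?_
    filter_upwards [self_mem_nhdsWithin] with s hs
    have hs : 0 < s := hs
    have := hl_semi_le hLnonneg hLmono hLconv hLsuper hg ht hs x x
    rw [dist_self, zero_div, hL0] at this
    rw [smul_eq_mul]
    exact mul_nonpos_of_nonneg_of_nonpos (by positivity) (by linarith)
  have hge : legendreH L w ≤ -D := by
    apply hl_H_le
    intro v hv
    have hLv := hLnonneg v hv
    rcases hv.eq_or_lt with h0 | hv0
    · rw [← h0, hL0]; linarith
    rcases le_or_gt w 0 with hw0 | hw0
    · nlinarith
    have hne : (𝓝[≠] x).NeBot := by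
      by_contra hbot
      rw [not_neBot] at hbot
      have : w = 0 := by
        rw [hw, metricSubgradient, hbot]
        simp [limsup, limsSup]
      linarith
    have hcob : IsCoboundedUnder (· ≤ ·) (𝓝[≠] x)
        (fun y => max (hopfLaxQ L g t x - hopfLaxQ L g t y) 0 / dist y x) := by
      apply IsBoundedUnder.isCoboundedUnder_le
      exact isBoundedUnder_of ⟨0, fun y => div_nonneg (le_max_right _ _) dist_nonneg⟩
    have main : ∀ w', 0 < w' → w' < w → w' * v - L v ≤ -D := by
      intro w' hw'0 hw'
      by_contra! hcon
      have hfr := frequently_lt_of_lt_limsup hcob (show w' < limsup _ _ from hw')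
      have hev := hslope.eventually_const_lt (show L v - w' * v < D by linarith)
      rw [eventually_nhdsWithin_iff, Metric.eventually_nhds_iff] at hev
      obtain ⟨δ, hδ, hball⟩ := hev
      have hnear : ∀ᶠ y in 𝓝[≠] x, dist y x < δ * v ∧ y ≠ x := by
        have h1 : ∀ᶠ y in 𝓝[≠] x, dist y x < δ * v :=
          nhdsWithin_le_nhds (Metric.ball_mem_nhds x (by positivity))
        exact h1.and self_mem_nhdsWithin
      obtain ⟨y, hy1, hy2, hy3⟩ := (hfr.and_eventually hnear).exists
      have hd : 0 < dist y x := dist_pos.2 hy3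
      rw [lt_div_iff₀ hd] at hy1
      have hs0 : 0 < dist y x / v := by positivity
      have h1 := hball (y := dist y x / v)
        (by rw [Real.dist_eq, sub_zero, abs_of_pos hs0, div_lt_iff₀ hv0]; exact hy2) hs0
      have h2 := hl_semi_le hLnonneg hLmono hLconv hLsuper hg ht hs0 x y
      have e : dist x y / (dist y x / v) = v := by rw [dist_comm x y]; field_simp
      rw [e] at h2
      rw [smul_eq_mul, inv_mul_eq_div, lt_div_iff₀ hs0] at h1
      have h3 : w' * dist y x < hopfLaxQ L g t x - hopfLaxQ L g t y := by
        rcases lt_max_iff.1 hy1 with h | h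
        · exact h
        · have : 0 < w' * dist y x := by positivity
          linarith
      have h4 : (L v - w' * v) * (dist y x / v) = dist y x / v * L v - w' * dist y x := by
        field_simp
      linarith
    by_contra! hcon
    have hlim : Tendsto (fun w' : ℝ => w' * v - L v) (𝓝[<] w) (𝓝 (w * v - L v)) := by
      apply Tendsto.mono_left _ nhdsWithin_le_nhds
      exact (Continuous.tendsto (by fun_prop) w)
    have := le_of_tendsto hlim (b := -D) (by
      filter_upwards [Ioo_mem_nhdsLT hw0] with w' h
      exact main w' h.1 h.2)
    linarith
  linarith

end HopfLaxHelpers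

/-- For every `x` and Lebesgue-a.e. `t > 0`, `u(x,t) = Q_t g(x)` is differentiable
in `t` and solves the Hamilton–Jacobi equation `∂_t u + H(|∇⁻ u|) = 0`. -/
theorem hopfLax_solves_HJ_ae
    {X : Type*} [MetricSpace X] [ProperSpace X] [Nonempty X]
    (hgeo : ∀ x y : X, ∀ τ : ℝ, 0 ≤ τ → τ ≤ 1 →
      ∃ z : X, dist x z = τ * dist x y ∧ dist z y = (1 - τ) * dist x y)
    (L : ℝ → ℝ) (hL0 : L 0 = 0)
    (hLnonneg : ∀ u, 0 ≤ u → 0 ≤ L u)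
    (hLmono : MonotoneOn L (Set.Ici 0))
    (hLconv : ConvexOn ℝ (Set.Ici 0) L)
    (hLsuper : Tendsto (fun u => L u / u) atTop atTop)
    (g : X → ℝ) (hg : ∃ K : ℝ≥0, LipschitzWith K g)
    (x : X) :
    ∀ᵐ t ∂(volume.restrict (Set.Ioi (0:ℝ))),
      ∃ D : ℝ, HasDerivAt (fun s => hopfLaxQ L g s x) D t ∧
        D + legendreH L (metricSubgradient (fun y => hopfLaxQ L g t y) x) = 0 := by
  obtain ⟨K, hK⟩ := hg
  have hmono : MonotoneOn (fun s => -hopfLaxQ L g s x) (Set.Ioi (0:ℝ)) := by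
    intro a ha b hb hab
    have ha : 0 < a := ha
    rcases hab.eq_or_lt with h | h
    · rw [h]
    · have := hl_semi_le hLnonneg hLmono hLconv hLsuper hK ha (sub_pos.2 h) x x
      rw [dist_self, zero_div, hL0, add_sub_cancel] at this
      simp only
      linarith
  filter_upwards [hmono.ae_differentiableWithinAt measurableSet_Ioi,
    ae_restrict_mem measurableSet_Ioi] with t hdt ht
  have ht : 0 < t := ht
  have h1 := (hdt.differentiableAt (Ioi_mem_nhds ht)).neg
  simp only [Pi.neg_def, neg_neg] at h1
  exact ⟨_, h1.hasDerivAt,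
    hl_point hgeo hL0 hLnonneg hLmono hLconv hLsuper hK x ht h1.hasDerivAt⟩
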